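/- Let r : closure(Ω) → ℝ be continuous with 1 ≤ r(x) ≤ p(x) for all x in closure(Ω). Then every u ∈ L^H(Ω) belongs to L^{r(·)}(Ω), and there exists a constant C > 0 such that ‖u‖_{r(·)} ≤ C ‖u‖_H for all u ∈ L^H(Ω); that is, the embedding L^H(Ω) ↪ L^{r(·)}(Ω) is continuous. (Lebesgue-space part of Proposition 2.2(i).) -/

import Mathlib

open MeasureTheory Filter Topology
open scoped ENNReal

/-!
The modulars `ρ` of `L^H` and `σ` of `L^{r(·)}` satisfy `σ ≤ |Ω| + ρ`, because
`|t|^r ≤ 1 + |t|^p` whenever `0 ≤ r ≤ p`. Since the exponents are at least `1`, both modulars are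
star-shaped: dividing the argument by `K ≥ 1` divides the modular by at least `K`. Hence, if
`ρ (u / τ) ≤ 1` and `K = |Ω| + 1`, then `σ (u / τ) ≤ K`, so `σ (u / (K τ)) ≤ 1`, and taking the
infimum over `τ` gives `‖u‖_{r(·)} ≤ K ‖u‖_H`.
-/

section Luxemburg

variable {E : Type*} [SMul ℝ E]

/-- A functional is star-shaped (about the origin) if it lies below its chords through the origin.
Convex modulars vanishing at `0` have this property. -/
def IsStarshaped (ρ : E → ℝ≥0∞) : Prop :=
  ∀ ⦃a : ℝ⦄, 0 ≤ a → a ≤ 1 → ∀ u, ρ (a • u) ≤ ENNReal.ofReal a * ρ u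

/-- The Luxemburg norm `inf {τ > 0 : ρ (u / τ) ≤ 1}` attached to a modular `ρ`; it has the junk
value `0` when no `τ` is admissible. -/
noncomputable def luxemburgNorm (ρ : E → ℝ≥0∞) (u : E) : ℝ :=
  sInf {τ : ℝ | 0 < τ ∧ ρ (τ⁻¹ • u) ≤ 1}

variable {ρ : E → ℝ≥0∞} {u : E}

theorem luxemburgNorm_le {τ : ℝ} (hτ : 0 < τ) (h : ρ (τ⁻¹ • u) ≤ 1) : luxemburgNorm ρ u ≤ τ :=
  csInf_le ⟨0, fun _ ht => ht.1.le⟩ ⟨hτ, h⟩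

theorem luxemburgNorm_eq_sInf_div {X : Type*} (ρ : (X → ℝ) → ℝ≥0∞) (u : X → ℝ) :
    luxemburgNorm ρ u = sInf {τ : ℝ | 0 < τ ∧ ρ (fun x => u x / τ) ≤ 1} := by
  simp only [luxemburgNorm, Pi.smul_def, smul_eq_mul, div_eq_inv_mul]

theorem IsStarshaped.map_inv_smul_le_one (hρ : IsStarshaped ρ) {K : ℝ} (hK : 1 ≤ K)
    (hu : ρ u ≤ ENNReal.ofReal K) : ρ (K⁻¹ • u) ≤ 1 := by
  have hK0 : 0 < K := one_pos.trans_le hK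
  calc ρ (K⁻¹ • u) ≤ ENNReal.ofReal K⁻¹ * ρ u :=
        hρ (inv_nonneg.2 hK0.le) (inv_le_one_of_one_le₀ hK) u
    _ ≤ ENNReal.ofReal K⁻¹ * ENNReal.ofReal K := by gcongr
    _ = 1 := by
      rw [← ENNReal.ofReal_mul (inv_nonneg.2 hK0.le), inv_mul_cancel₀ hK0.ne', ENNReal.ofReal_one]

theorem IsStarshaped.exists_pos_map_inv_smul_le_one (hρ : IsStarshaped ρ) (hu : ρ u < ⊤) :
    ∃ τ : ℝ, 0 < τ ∧ ρ (τ⁻¹ • u) ≤ 1 := by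
  refine ⟨max 1 (ρ u).toReal, by positivity, hρ.map_inv_smul_le_one (le_max_left _ _) ?_⟩
  exact (ENNReal.le_ofReal_iff_toReal_le hu.ne (by positivity)).2 (le_max_right _ _)

end Luxemburg

theorem luxemburgNorm_le_mul_of_le_add {E : Type*} [MulAction ℝ E] {ρ σ : E → ℝ≥0∞} {u : E}
    (hρ : IsStarshaped ρ) (hσ : IsStarshaped σ) {c : ℝ≥0∞} (hc : c < ⊤)
    (hle : ∀ v, σ v ≤ c + ρ v) (hu : ρ u < ⊤) :
    luxemburgNorm σ u ≤ (c.toReal + 1) * luxemburgNorm ρ u := by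
  set K : ℝ := c.toReal + 1
  have hK : 1 ≤ K := le_add_of_nonneg_left ENNReal.toReal_nonneg
  have hK0 : 0 < K := one_pos.trans_le hK
  have hcK : c + 1 = ENNReal.ofReal K := by
    rw [ENNReal.ofReal_add ENNReal.toReal_nonneg zero_le_one, ENNReal.ofReal_toReal hc.ne,
      ENNReal.ofReal_one]
  rw [← div_le_iff₀' hK0]
  refine le_csInf (hρ.exists_pos_map_inv_smul_le_one hu) fun τ ⟨hτ, hρτ⟩ => ?_
  rw [div_le_iff₀' hK0]
  have hστ : σ (τ⁻¹ • u) ≤ ENNReal.ofReal K :=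
    calc σ (τ⁻¹ • u) ≤ c + ρ (τ⁻¹ • u) := hle _
      _ ≤ c + 1 := by gcongr
      _ = ENNReal.ofReal K := hcK
  refine luxemburgNorm_le (mul_pos hK0 hτ) ?_
  rw [mul_inv, mul_smul]
  exact hσ.map_inv_smul_le_one hK hστ

section IntegralModular

variable {X E : Type*} [MeasurableSpace X] {ν : Measure X} {φ ψ : X → E → ℝ≥0∞}

/-- The Musielak–Orlicz modular `u ↦ ∫ φ(x, u(x)) dν(x)` of an integrand `φ`. -/
noncomputable def integralModular (ν : Measure X) (φ : X → E → ℝ≥0∞) (u : X → E) : ℝ≥0∞ :=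
  ∫⁻ x, φ x (u x) ∂ν

theorem isStarshaped_integralModular [SMul ℝ E] (hφ : ∀ᵐ x ∂ν, IsStarshaped (φ x)) :
    IsStarshaped (integralModular ν φ) := by
  intro a ha0 ha1 u
  calc ∫⁻ x, φ x (a • u x) ∂ν ≤ ∫⁻ x, ENNReal.ofReal a * φ x (u x) ∂ν :=
        lintegral_mono_ae (hφ.mono fun x hx => hx ha0 ha1 (u x))
    _ = ENNReal.ofReal a * ∫⁻ x, φ x (u x) ∂ν := lintegral_const_mul' _ _ ENNReal.ofReal_ne_top

theorem integralModular_le_lintegral_add {g : X → ℝ≥0∞} (hg : AEMeasurable g ν)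
    (hle : ∀ᵐ x ∂ν, ∀ t, ψ x t ≤ g x + φ x t) (u : X → E) :
    integralModular ν ψ u ≤ ∫⁻ x, g x ∂ν + integralModular ν φ u :=
  calc ∫⁻ x, ψ x (u x) ∂ν ≤ ∫⁻ x, (g x + φ x (u x)) ∂ν :=
        lintegral_mono_ae (hle.mono fun x hx => hx (u x))
    _ = ∫⁻ x, g x ∂ν + ∫⁻ x, φ x (u x) ∂ν := lintegral_add_left' hg _

theorem integralModular_lt_top_and_exists_luxemburgNorm_le [MulAction ℝ E]
    (hφ : ∀ᵐ x ∂ν, IsStarshaped (φ x)) (hψ : ∀ᵐ x ∂ν, IsStarshaped (ψ x))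
    {g : X → ℝ≥0∞} (hg : AEMeasurable g ν) (hg_fin : ∫⁻ x, g x ∂ν < ⊤)
    (hle : ∀ᵐ x ∂ν, ∀ t, ψ x t ≤ g x + φ x t) :
    (∀ u, integralModular ν φ u < ⊤ → integralModular ν ψ u < ⊤) ∧
      ∃ C : ℝ, 0 < C ∧ ∀ u, integralModular ν φ u < ⊤ →
        luxemburgNorm (integralModular ν ψ) u ≤ C * luxemburgNorm (integralModular ν φ) u := by
  have hmod := integralModular_le_lintegral_add hg hle
  refine ⟨fun u hu => (hmod u).trans_lt (ENNReal.add_lt_top.2 ⟨hg_fin, hu⟩),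
    (∫⁻ x, g x ∂ν).toReal + 1, by positivity, fun u hu => ?_⟩
  exact luxemburgNorm_le_mul_of_le_add (isStarshaped_integralModular hφ)
    (isStarshaped_integralModular hψ) hg_fin hmod hu

end IntegralModular

section DoublePhase

/-- The double phase function `t ↦ |t|^p + m |t|^q`, the integrand of the modular of `L^H` at a
point where the variable exponents are `p`, `q` and the weight is `m`. -/
noncomputable def doublePhase (p q m t : ℝ) : ℝ≥0∞ :=
  ENNReal.ofReal (|t| ^ p + m * |t| ^ q)

/-- The power function `t ↦ |t|^r`, the integrand of the modular of `L^{r(·)}` at a point where the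
variable exponent is `r`. -/
noncomputable def absPower (r t : ℝ) : ℝ≥0∞ :=
  ENNReal.ofReal (|t| ^ r)

variable {p q r m : ℝ}

theorem abs_mul_rpow_le_mul_abs_rpow {a e : ℝ} (ha0 : 0 ≤ a) (ha1 : a ≤ 1) (he : 1 ≤ e) (t : ℝ) :
    |a * t| ^ e ≤ a * |t| ^ e := by
  rw [abs_mul, abs_of_nonneg ha0, Real.mul_rpow ha0 (abs_nonneg t)]
  gcongr
  exact Real.rpow_le_self_of_le_one ha0 ha1 he

theorem abs_rpow_le_one_add_abs_rpow (hr : 0 ≤ r) (hrp : r ≤ p) (t : ℝ) :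
    |t| ^ r ≤ 1 + |t| ^ p := by
  rcases le_total |t| 1 with ht | ht
  · exact le_add_of_le_of_nonneg (Real.rpow_le_one (abs_nonneg t) ht hr) (by positivity)
  · exact le_add_of_nonneg_of_le zero_le_one (Real.rpow_le_rpow_of_exponent_le ht hrp)

theorem isStarshaped_absPower (hr : 1 ≤ r) : IsStarshaped (absPower r) := by
  intro a ha0 ha1 t
  rw [absPower, absPower, ← ENNReal.ofReal_mul ha0]
  exact ENNReal.ofReal_le_ofReal (abs_mul_rpow_le_mul_abs_rpow ha0 ha1 hr t)

theorem isStarshaped_doublePhase (hp : 1 ≤ p) (hq : 1 ≤ q) (hm : 0 ≤ m) :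
    IsStarshaped (doublePhase p q m) := by
  intro a ha0 ha1 t
  rw [doublePhase, doublePhase, ← ENNReal.ofReal_mul ha0]
  refine ENNReal.ofReal_le_ofReal ?_
  calc |a * t| ^ p + m * |a * t| ^ q ≤ a * |t| ^ p + m * (a * |t| ^ q) := by
        gcongr <;> exact abs_mul_rpow_le_mul_abs_rpow ha0 ha1 ‹_› t
    _ = a * (|t| ^ p + m * |t| ^ q) := by ring

theorem absPower_le_one_add_doublePhase (hr : 0 ≤ r) (hrp : r ≤ p) (hm : 0 ≤ m) (t : ℝ) :
    absPower r t ≤ 1 + doublePhase p q m t := by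
  rw [absPower, doublePhase, ← ENNReal.ofReal_one,
    ← ENNReal.ofReal_add zero_le_one (by positivity), ← add_assoc]
  exact ENNReal.ofReal_le_ofReal
    (le_add_of_le_of_nonneg (abs_rpow_le_one_add_abs_rpow hr hrp t) (by positivity))

end DoublePhase

theorem stmt_8_general {X : Type*} [MeasurableSpace X] (ν : Measure X) [IsFiniteMeasure ν]
    {p q r μ : X → ℝ} (hr : ∀ᵐ x ∂ν, 1 ≤ r x) (hrp : ∀ᵐ x ∂ν, r x ≤ p x)
    (hq : ∀ᵐ x ∂ν, 1 ≤ q x) (hμ : ∀ᵐ x ∂ν, 0 ≤ μ x) :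
    let ρ := integralModular ν fun x => doublePhase (p x) (q x) (μ x)
    let σ := integralModular ν fun x => absPower (r x)
    (∀ u, ρ u < ⊤ → σ u < ⊤) ∧
      ∃ C : ℝ, 0 < C ∧ ∀ u, ρ u < ⊤ → luxemburgNorm σ u ≤ C * luxemburgNorm ρ u := by
  refine integralModular_lt_top_and_exists_luxemburgNorm_le (g := fun _ => 1) ?_ ?_
    aemeasurable_const (by simp) ?_
  · filter_upwards [hr, hrp, hq, hμ] with x hrx hrpx hqx hμx
    exact isStarshaped_doublePhase (hrx.trans hrpx) hqx hμx
  · exact hr.mono fun x hrx => isStarshaped_absPower hrx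
  · filter_upwards [hr, hrp, hμ] with x hrx hrpx hμx
    exact absPower_le_one_add_doublePhase (zero_le_one.trans hrx) hrpx hμx

theorem stmt_8
    (N : ℕ) (hN : 2 ≤ N)
    (Ω : Set (Fin N → ℝ)) (hΩo : IsOpen Ω) (hΩb : Bornology.IsBounded Ω)
    (p q : (Fin N → ℝ) → ℝ)
    (hpc : ContinuousOn p (closure Ω)) (hqc : ContinuousOn q (closure Ω))
    (hpq : ∀ x ∈ closure Ω, 1 < p x ∧ p x < (N : ℝ) ∧ p x < q x ∧
      q x < (N : ℝ) * p x / ((N : ℝ) - p x))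
    (μ : (Fin N → ℝ) → ℝ) (hμm : Measurable μ)
    (hμ0 : ∀ᵐ x ∂(volume.restrict Ω), 0 ≤ μ x)
    (hμb : ∃ C : ℝ, ∀ᵐ x ∂(volume.restrict Ω), μ x ≤ C)
    (ρ : ((Fin N → ℝ) → ℝ) → ℝ≥0∞)
    (hρ : ρ = fun u => ∫⁻ x in Ω, ENNReal.ofReal (|u x| ^ p x + μ x * |u x| ^ q x))
    (nrm : ((Fin N → ℝ) → ℝ) → ℝ)
    (hnrm : nrm = fun u => sInf {τ : ℝ | 0 < τ ∧ ρ (fun x => u x / τ) ≤ 1})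
    (r : (Fin N → ℝ) → ℝ) (hrc : ContinuousOn r (closure Ω))
    (hr : ∀ x ∈ closure Ω, 1 ≤ r x ∧ r x ≤ p x)
    (ρr : ((Fin N → ℝ) → ℝ) → ℝ≥0∞)
    (hρr : ρr = fun u => ∫⁻ x in Ω, ENNReal.ofReal (|u x| ^ r x))
    (nrmr : ((Fin N → ℝ) → ℝ) → ℝ)
    (hnrmr : nrmr = fun u => sInf {τ : ℝ | 0 < τ ∧ ρr (fun x => u x / τ) ≤ 1}) :
    (∀ u : (Fin N → ℝ) → ℝ, Measurable u → ρ u < ⊤ → ρr u < ⊤) ∧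
      ∃ C : ℝ, 0 < C ∧ ∀ u : (Fin N → ℝ) → ℝ, Measurable u → ρ u < ⊤ →
        nrmr u ≤ C * nrm u := by
  have : IsFiniteMeasure (volume.restrict Ω) :=
    isFiniteMeasure_restrict.2 hΩb.measure_lt_top.ne
  have hcl : ∀ᵐ x ∂(volume.restrict Ω), x ∈ closure Ω :=
    (ae_restrict_mem hΩo.measurableSet).mono fun _ hx => subset_closure hx
  obtain ⟨hfin, C, hC, hle⟩ := stmt_8_general (volume.restrict Ω)
    (hcl.mono fun x hx => (hr x hx).1) (hcl.mono fun x hx => (hr x hx).2)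
    (hcl.mono fun x hx => ((hpq x hx).1.trans (hpq x hx).2.2.1).le) hμ0
  subst hρ hnrm hρr hnrmr
  simp only [luxemburgNorm_eq_sInf_div] at hle
  exact ⟨fun u _ hu => hfin u hu, C, hC, fun u _ hu => hle u hu⟩
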